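/- arXiv:2212.04121 — 2 statements merged into one kernel-verified Lean document; each statement's English description precedes it below -/
import Mathlib

section
/- For t = 2/3, the squares S^t_n of side length n^{-t} for n = 1, 2, 3, ... can be packed perfectly into the rectangle of dimensions ζ(2t) × 1. That is, there exist positions (x_n, y_n) ∈ ℝ² for each positive integer n such that each axis-parallel square [x_n, x_n + n^{-2/3}] × [y_n, y_n + n^{-2/3}] is contained in the rectangle [0, ζ(4/3)] × [0, 1], and the interiors of distinct squares are pairwise disjoint. (The packing is perfect since the total area ∑_{n=1}^∞ n^{-4/3} = ζ(4/3) equals the area of the rectangle.) -/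
/-- The real zeta function as the series `∑_{i=1}^∞ i^{-s}` (for `s > 1`). -/
noncomputable def zetaR (s : ℝ) : ℝ := ∑' n : ℕ+, (n : ℝ) ^ (-s)

namespace SquarePacking

/-- The axis-parallel rectangle `[x, x + w] × [y, y + h]`. -/
structure Rect where
  x : ℝ
  y : ℝ
  w : ℝ
  h : ℝ

instance : Nonempty Rect := ⟨⟨0, 0, 0, 0⟩⟩

namespace Rect

/-- Containment of rectangles. -/
structure Within (r q : Rect) : Prop where
  left : q.x ≤ r.x
  right : r.x + r.w ≤ q.x + q.w
  bottom : q.y ≤ r.y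
  top : r.y + r.h ≤ q.y + q.h

/-- Two rectangles lie on different sides of a vertical or horizontal line. -/
def Separated (r q : Rect) : Prop :=
  r.x + r.w ≤ q.x ∨ q.x + q.w ≤ r.x ∨ r.y + r.h ≤ q.y ∨ q.y + q.h ≤ r.y

lemma Within.refl (r : Rect) : r.Within r := ⟨le_rfl, le_rfl, le_rfl, le_rfl⟩

lemma Within.trans {r q p : Rect} (h₁ : r.Within q) (h₂ : q.Within p) : r.Within p :=
  ⟨h₂.left.trans h₁.left, h₁.right.trans h₂.right, h₂.bottom.trans h₁.bottom,
    h₁.top.trans h₂.top⟩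

lemma Separated.symm {r q : Rect} (h : r.Separated q) : q.Separated r := by
  unfold Separated at *
  tauto

lemma Separated.mono_left {r r' q : Rect} (h : r.Separated q) (hr : r'.Within r) :
    r'.Separated q := by
  obtain ⟨h₁, h₂, h₃, h₄⟩ := hr
  rcases h with h | h | h | h
  · exact .inl (by linarith)
  · exact .inr (.inl (by linarith))
  · exact .inr (.inr (.inl (by linarith)))
  · exact .inr (.inr (.inr (by linarith)))

lemma Separated.mono_right {r q q' : Rect} (h : r.Separated q) (hq : q'.Within q) :
    r.Separated q' :=
  (h.symm.mono_left hq).symm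

lemma Separated.disjoint {r q : Rect} (h : r.Separated q) :
    Disjoint (Set.Ioo r.x (r.x + r.w) ×ˢ Set.Ioo r.y (r.y + r.h))
      (Set.Ioo q.x (q.x + q.w) ×ˢ Set.Ioo q.y (q.y + q.h)) := by
  rw [Set.disjoint_left]
  rintro ⟨a, b⟩ ⟨⟨h₁, h₂⟩, h₃, h₄⟩ ⟨⟨h₅, h₆⟩, h₇, h₈⟩
  dsimp only at *
  rcases h with h | h | h | h <;> linarith

lemma Within.subset {r q : Rect} (h : r.Within q) :
    Set.Icc r.x (r.x + r.w) ×ˢ Set.Icc r.y (r.y + r.h) ⊆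
      Set.Icc q.x (q.x + q.w) ×ˢ Set.Icc q.y (q.y + q.h) :=
  Set.prod_mono (Set.Icc_subset_Icc h.left h.right) (Set.Icc_subset_Icc h.bottom h.top)

end Rect

/-- A free rectangle with a marked direction: horizontal if `flat`, vertical otherwise. -/
structure Cell extends Rect where
  flat : Bool

namespace Cell

/-- The extent of a cell in its marked direction. -/
def length (c : Cell) : ℝ := if c.flat then c.w else c.h

/-- The extent of a cell across its marked direction. -/
def width (c : Cell) : ℝ := if c.flat then c.h else c.w

/-- A cell at least as long and as wide as `s` is cut into a square of side `s`, a cell of length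
`s`, and a cell of the same length as the original one. -/
lemma exists_cut (c : Cell) {s : ℝ} (hs : 0 ≤ s) (hl : s ≤ c.length) (hw : s ≤ c.width) :
    ∃ (q : Rect) (d e : Cell), q.w = s ∧ q.h = s ∧
      q.Within c.toRect ∧ d.Within c.toRect ∧ e.Within c.toRect ∧
      q.Separated d.toRect ∧ q.Separated e.toRect ∧ d.Separated e.toRect ∧
      d.length = s ∧ d.width = c.length - s ∧ e.length = c.length ∧ e.width = c.width - s := by
  obtain ⟨⟨x, y, w, h⟩, _ | _⟩ := c
  · simp only [length, width, Bool.false_eq_true, if_false] at hl hw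
    refine ⟨⟨x, y, s, s⟩, ⟨⟨x, y + s, s, h - s⟩, true⟩, ⟨⟨x + s, y, w - s, h⟩, false⟩, rfl, rfl,
      ?_, ?_, ?_, ?_, ?_, ?_, by simp [length, width]⟩
    · constructor <;> dsimp only <;> linarith
    · constructor <;> dsimp only <;> linarith
    · constructor <;> dsimp only <;> linarith
    · simp [Rect.Separated]
    · simp [Rect.Separated]
    · simp [Rect.Separated]
  · simp only [length, width, if_true] at hl hw
    refine ⟨⟨x, y, s, s⟩, ⟨⟨x + s, y, w - s, s⟩, false⟩, ⟨⟨x, y + s, w, h - s⟩, true⟩, rfl, rfl,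
      ?_, ?_, ?_, ?_, ?_, ?_, by simp [length, width]⟩
    · constructor <;> dsimp only <;> linarith
    · constructor <;> dsimp only <;> linarith
    · constructor <;> dsimp only <;> linarith
    · simp [Rect.Separated]
    · simp [Rect.Separated]
    · simp [Rect.Separated]

end Cell

/-- The cells in `L` are free after squares of sides `s 0, …, s (n - 1)` have been cut off a
rectangle of length `1` and area `A`. -/
structure Free (s : ℕ → ℝ) (A : ℝ) (n : ℕ) (L : List Cell) : Prop where
  le_length : ∀ c ∈ L, s n ≤ c.length
  separated : L.Pairwise fun c d => c.Separated d.toRect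
  sum_area : (L.map fun c => c.width * c.length).sum = A - ∑ k ∈ Finset.range n, s k ^ 2
  sum_length : (L.map Cell.length).sum = 1 + ∑ k ∈ Finset.range n, s k

lemma Free.exists_le_width {s : ℕ → ℝ} {A : ℝ} {n : ℕ} {L : List Cell} (hL : Free s A n L)
    (hs : ∀ k, 0 ≤ s k)
    (hA : s n * (1 + ∑ k ∈ Finset.range n, s k) < A - ∑ k ∈ Finset.range n, s k ^ 2) :
    ∃ c ∈ L, s n ≤ c.width := by
  by_contra! hc
  rw [← hL.sum_area, ← hL.sum_length, ← List.sum_map_mul_left] at hA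
  refine hA.not_ge (List.sum_le_sum fun c hcL => ?_)
  exact mul_le_mul_of_nonneg_right (hc c hcL).le ((hs n).trans (hL.le_length c hcL))

lemma Free.exists_next {s : ℕ → ℝ} {A : ℝ} {n : ℕ} {L : List Cell} (hL : Free s A n L)
    (hs : ∀ k, 0 ≤ s k) (hanti : Antitone s)
    (hA : s n * (1 + ∑ k ∈ Finset.range n, s k) < A - ∑ k ∈ Finset.range n, s k ^ 2) :
    ∃ (L' : List Cell) (q : Rect), Free s A (n + 1) L' ∧ q.w = s n ∧ q.h = s n ∧
      (∃ c ∈ L, q.Within c.toRect) ∧ (∀ d ∈ L', ∃ c ∈ L, d.Within c.toRect) ∧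
      ∀ d ∈ L', q.Separated d.toRect := by
  obtain ⟨c, hc, hw⟩ := hL.exists_le_width hs hA
  obtain ⟨q, d, e, hqw, hqh, hqc, hdc, hec, hqd, hqe, hde, hdl, hdw, hel, hew⟩ :=
    c.exists_cut (hs n) (hL.le_length c hc) hw
  obtain ⟨M, hM⟩ : ∃ M, L.Perm (c :: M) := by
    obtain ⟨l₁, l₂, rfl⟩ := List.append_of_mem hc
    exact ⟨l₁ ++ l₂, List.perm_middle⟩
  have hsep : (c :: M).Pairwise fun c d => c.Separated d.toRect :=
    (hM.pairwise_iff fun h => h.symm).1 hL.separated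
  rw [List.pairwise_cons] at hsep
  have hmem : ∀ {a}, a ∈ M → a ∈ L := fun ha => hM.mem_iff.2 (List.mem_cons_of_mem _ ha)
  have harea := (hM.map fun c => c.width * c.length).sum_eq
  have hlen := (hM.map Cell.length).sum_eq
  rw [hL.sum_area, List.map_cons, List.sum_cons] at harea
  rw [hL.sum_length, List.map_cons, List.sum_cons] at hlen
  have hle : s (n + 1) ≤ s n := hanti n.le_succ
  refine ⟨d :: e :: M, q, ⟨?_, ?_, ?_, ?_⟩, hqw, hqh, ⟨c, hc, hqc⟩, ?_, ?_⟩
  · simp only [List.forall_mem_cons]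
    exact ⟨hdl ▸ hle, hel ▸ hle.trans (hL.le_length c hc),
      fun a ha => hle.trans (hL.le_length a (hmem ha))⟩
  · simp only [List.pairwise_cons, List.forall_mem_cons]
    exact ⟨⟨hde, fun a ha => (hsep.1 a ha).mono_left hdc⟩,
      fun a ha => (hsep.1 a ha).mono_left hec, hsep.2⟩
  · simp only [List.map_cons, List.sum_cons, Finset.sum_range_succ, hdl, hdw, hel, hew]
    linarith
  · simp only [List.map_cons, List.sum_cons, Finset.sum_range_succ, hdl, hel]
    linarith
  · simp only [List.forall_mem_cons]
    exact ⟨⟨c, hc, hdc⟩, ⟨c, hc, hec⟩, fun a ha => ⟨a, hmem ha, .refl _⟩⟩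
  · simp only [List.forall_mem_cons]
    exact ⟨hqd, hqe, fun a ha => (hsep.1 a ha).mono_left hqc⟩

/-- Squares with nonincreasing sides `s n` can be packed into `[0, A] × [0, 1]` if at each step
the area left over exceeds `s n` times the total length of the free cells. -/
theorem exists_packing {s : ℕ → ℝ} {A : ℝ} (hs : ∀ k, 0 ≤ s k) (hanti : Antitone s)
    (hs₀ : s 0 ≤ 1)
    (hA : ∀ n, s n * (1 + ∑ k ∈ Finset.range n, s k) < A - ∑ k ∈ Finset.range n, s k ^ 2) :
    ∃ q : ℕ → Rect, (∀ n, (q n).w = s n ∧ (q n).h = s n) ∧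
      (∀ n, (q n).Within ⟨0, 0, A, 1⟩) ∧ ∀ m n, m < n → (q m).Separated (q n) := by
  choose! next sq hfree hqw hqh hq hsub hsep using
    fun n L (hL : Free s A n L) => hL.exists_next hs hanti (hA n)
  let L : ℕ → List Cell := fun n => Nat.rec [⟨⟨0, 0, A, 1⟩, false⟩] next n
  have hL : ∀ n, Free s A n (L n) := by
    intro n
    induction n with
    | zero =>
      change Free s A 0 [⟨⟨0, 0, A, 1⟩, false⟩]
      constructor <;> simp [Cell.length, Cell.width, hs₀]
    | succ n ih => exact hfree n (L n) ih
  have hdesc : ∀ m k, ∀ d ∈ L (m + k), ∃ c ∈ L m, d.Within c.toRect := by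
    intro m k
    induction k with
    | zero => exact fun d hd => ⟨d, hd, .refl _⟩
    | succ k ih =>
      intro d hd
      obtain ⟨e, he, hde⟩ := hsub (m + k) (L (m + k)) (hL _) d hd
      obtain ⟨c, hc, hec⟩ := ih e he
      exact ⟨c, hc, hde.trans hec⟩
  refine ⟨fun n => sq n (L n), fun n => ⟨hqw n _ (hL n), hqh n _ (hL n)⟩, fun n => ?_,
    fun m n hmn => ?_⟩
  · obtain ⟨c, hc, hqc⟩ := hq n _ (hL n)
    obtain ⟨d, hd, hcd⟩ := hdesc 0 n c (by rwa [Nat.zero_add])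
    obtain rfl : d = ⟨⟨0, 0, A, 1⟩, false⟩ := List.mem_singleton.1 hd
    exact hqc.trans hcd
  · obtain ⟨k, rfl⟩ := Nat.exists_eq_add_of_lt hmn
    obtain ⟨c, hc, hqc⟩ := hq (m + k + 1) _ (hL _)
    obtain ⟨d, hd, hcd⟩ := hdesc (m + 1) k c (by rwa [Nat.add_right_comm])
    exact (hsep m _ (hL m) d hd).mono_right (hqc.trans hcd)

section CubeRoots

variable {a b : ℝ}

lemma inv_sq_le_of_cube_eq (ha : 0 < a) (hab : a ≤ b) (h : b ^ 3 = a ^ 3 + 1) :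
    (b ^ 2)⁻¹ ≤ 3 * b - 3 * a := by
  have hb : 0 < b := ha.trans_le hab
  rw [inv_le_iff_one_le_mul₀ (by positivity)]
  nlinarith [mul_nonneg (sub_nonneg.2 hab) (sub_nonneg.2 hab), mul_nonneg (sub_nonneg.2 hab)
    (mul_nonneg (sub_nonneg.2 hab) (add_pos ha (add_pos hb hb)).le)]

lemma inv_sub_inv_le_of_cube_eq (ha : 0 < a) (hab : a ≤ b) (h : b ^ 3 = a ^ 3 + 1) :
    3 * a⁻¹ - 3 * b⁻¹ ≤ (a ^ 2)⁻¹ ^ 2 := by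
  have hb : 0 < b := ha.trans_le hab
  have key : 3 * a ^ 2 * (b - a) ≤ 1 := by
    nlinarith [mul_nonneg (sub_nonneg.2 hab)
      (mul_nonneg (sub_nonneg.2 hab) (add_pos hb (add_pos ha ha)).le)]
  have h₁ : 3 * a⁻¹ - 3 * b⁻¹ = 3 * a ^ 2 * (b - a) * (a ^ 3 * b)⁻¹ := by
    field_simp
  have h₂ : (a ^ 2)⁻¹ ^ 2 = (a ^ 3 * a)⁻¹ := by
    rw [inv_pow]
    ring_nf
  rw [h₁, h₂]
  calc 3 * a ^ 2 * (b - a) * (a ^ 3 * b)⁻¹ ≤ 1 * (a ^ 3 * b)⁻¹ := by gcongr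
    _ ≤ (a ^ 3 * a)⁻¹ := by rw [one_mul]; gcongr

end CubeRoots

/-- The cube root of `n + 1`. -/
noncomputable def cbrtSucc (n : ℕ) : ℝ := ((n : ℝ) + 1) ^ (1 / 3 : ℝ)

lemma cbrtSucc_pos (n : ℕ) : 0 < cbrtSucc n := by
  unfold cbrtSucc
  positivity

lemma cbrtSucc_zero : cbrtSucc 0 = 1 := by simp [cbrtSucc]

lemma cbrtSucc_mono : Monotone cbrtSucc := fun m n h => by
  unfold cbrtSucc
  gcongr

lemma cbrtSucc_cube (n : ℕ) : cbrtSucc n ^ 3 = (n : ℝ) + 1 := by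
  unfold cbrtSucc
  rw [← Real.rpow_natCast, ← Real.rpow_mul (by positivity)]
  norm_num

lemma cbrtSucc_succ_cube (n : ℕ) : cbrtSucc (n + 1) ^ 3 = cbrtSucc n ^ 3 + 1 := by
  simp [cbrtSucc_cube]

lemma inv_cbrtSucc_sq (n : ℕ) : (cbrtSucc n ^ 2)⁻¹ = ((n : ℝ) + 1) ^ (-(2 / 3 : ℝ)) := by
  unfold cbrtSucc
  rw [← Real.rpow_natCast, ← Real.rpow_mul (by positivity), ← Real.rpow_neg (by positivity)]
  norm_num

lemma tendsto_inv_cbrtSucc :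
    Filter.Tendsto (fun n => (cbrtSucc n)⁻¹) Filter.atTop (nhds 0) := by
  refine Filter.Tendsto.inv_tendsto_atTop ?_
  exact (tendsto_rpow_atTop (by norm_num)).comp
    (Filter.tendsto_atTop_add_const_right _ _ tendsto_natCast_atTop_atTop)

lemma sum_inv_cbrtSucc_sq_le (n : ℕ) :
    ∑ k ∈ Finset.range (n + 1), (cbrtSucc k ^ 2)⁻¹ ≤ 3 * cbrtSucc n - 2 := by
  induction n with
  | zero => norm_num [cbrtSucc_zero]
  | succ n ih =>
    rw [Finset.sum_range_succ]
    linarith [inv_sq_le_of_cube_eq (cbrtSucc_pos n) (cbrtSucc_mono n.le_succ)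
      (cbrtSucc_succ_cube n)]

lemma hasSum_inv_cbrtSucc_pow_four :
    HasSum (fun n => (cbrtSucc n ^ 2)⁻¹ ^ 2) (zetaR (4 / 3)) := by
  have hterm : ∀ n : ℕ, (cbrtSucc n ^ 2)⁻¹ ^ 2 = ((n + 1 : ℕ) : ℝ) ^ (-(4 / 3 : ℝ)) := by
    intro n
    rw [inv_cbrtSucc_sq, ← Real.rpow_natCast, ← Real.rpow_mul (by positivity)]
    push_cast
    norm_num
  have hsum : Summable fun n : ℕ => ((n + 1 : ℕ) : ℝ) ^ (-(4 / 3 : ℝ)) :=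
    (summable_nat_add_iff 1).2 (Real.summable_nat_rpow.2 (by norm_num))
  have hz : zetaR (4 / 3) = ∑' n : ℕ, ((n + 1 : ℕ) : ℝ) ^ (-(4 / 3 : ℝ)) :=
    tsum_pnat_eq_tsum_succ (f := fun n : ℕ => (n : ℝ) ^ (-(4 / 3 : ℝ)))
  rw [hz]
  simp only [hterm]
  exact hsum.hasSum

lemma three_mul_inv_cbrtSucc_le (n : ℕ) :
    3 * (cbrtSucc n)⁻¹ ≤
      zetaR (4 / 3) - ∑ k ∈ Finset.range n, (cbrtSucc k ^ 2)⁻¹ ^ 2 := by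
  have hmono : Monotone fun m =>
      ∑ k ∈ Finset.range m, (cbrtSucc k ^ 2)⁻¹ ^ 2 + 3 * (cbrtSucc m)⁻¹ := by
    refine monotone_nat_of_le_succ fun m => ?_
    rw [Finset.sum_range_succ]
    linarith [inv_sub_inv_le_of_cube_eq (cbrtSucc_pos m) (cbrtSucc_mono m.le_succ)
      (cbrtSucc_succ_cube m)]
  have hlim := hasSum_inv_cbrtSucc_pow_four.tendsto_sum_nat.add
    (tendsto_inv_cbrtSucc.const_mul 3)
  rw [mul_zero, add_zero] at hlim
  have := hmono.ge_of_tendsto hlim n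
  linarith

lemma inv_cbrtSucc_sq_mul_lt (n : ℕ) :
    (cbrtSucc n ^ 2)⁻¹ * (1 + ∑ k ∈ Finset.range n, (cbrtSucc k ^ 2)⁻¹) <
      zetaR (4 / 3) - ∑ k ∈ Finset.range n, (cbrtSucc k ^ 2)⁻¹ ^ 2 := by
  have hpos := cbrtSucc_pos n
  have hsq : 0 < (cbrtSucc n ^ 2)⁻¹ := by positivity
  have hsum := sum_inv_cbrtSucc_sq_le n
  rw [Finset.sum_range_succ] at hsum
  refine lt_of_lt_of_le ?_ (three_mul_inv_cbrtSucc_le n)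
  calc (cbrtSucc n ^ 2)⁻¹ * (1 + ∑ k ∈ Finset.range n, (cbrtSucc k ^ 2)⁻¹)
      < (cbrtSucc n ^ 2)⁻¹ * (3 * cbrtSucc n) := by gcongr; linarith
    _ = 3 * (cbrtSucc n)⁻¹ := by field_simp

end SquarePacking

/-- For `t = 2/3`, the squares of side `n^{-t}` (`n ≥ 1`) can be packed perfectly into
the rectangle `[0, ζ(4/3)] × [0, 1]`. -/
theorem perfect_packing_two_thirds :
    ∃ x y : ℕ+ → ℝ,
      (∀ n : ℕ+,
        Set.Icc (x n) (x n + (n : ℝ) ^ (-(2 / 3 : ℝ))) ×ˢ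
            Set.Icc (y n) (y n + (n : ℝ) ^ (-(2 / 3 : ℝ))) ⊆
          Set.Icc (0 : ℝ) (zetaR (4 / 3)) ×ˢ Set.Icc (0 : ℝ) 1) ∧
      (∀ m n : ℕ+, m ≠ n →
        Disjoint
          (Set.Ioo (x m) (x m + (m : ℝ) ^ (-(2 / 3 : ℝ))) ×ˢ
            Set.Ioo (y m) (y m + (m : ℝ) ^ (-(2 / 3 : ℝ))))
          (Set.Ioo (x n) (x n + (n : ℝ) ^ (-(2 / 3 : ℝ))) ×ˢ
            Set.Ioo (y n) (y n + (n : ℝ) ^ (-(2 / 3 : ℝ))))) := by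
  obtain ⟨q, hside, hin, hsep⟩ := SquarePacking.exists_packing
    (s := fun n => (SquarePacking.cbrtSucc n ^ 2)⁻¹) (A := zetaR (4 / 3))
    (fun n => by positivity)
    (fun m n h => by
      have := SquarePacking.cbrtSucc_pos m
      have := SquarePacking.cbrtSucc_mono h
      dsimp only
      gcongr)
    (by simp [SquarePacking.cbrtSucc_zero]) SquarePacking.inv_cbrtSucc_sq_mul_lt
  have hside' : ∀ n : ℕ+, (n : ℝ) ^ (-(2 / 3 : ℝ)) = (q n.natPred).w ∧
      (n : ℝ) ^ (-(2 / 3 : ℝ)) = (q n.natPred).h := by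
    intro n
    have hn : (n.natPred : ℝ) + 1 = (n : ℝ) := by exact_mod_cast n.natPred_add_one
    rw [(hside _).1, (hside _).2, SquarePacking.inv_cbrtSucc_sq, hn]
    exact ⟨rfl, rfl⟩
  refine ⟨fun n => (q n.natPred).x, fun n => (q n.natPred).y, fun n => ?_, fun m n hmn => ?_⟩
  · have h := (hin n.natPred).subset
    rw [← (hside' n).1, ← (hside' n).2] at h
    simpa only [zero_add] using h
  · have h : (q m.natPred).Separated (q n.natPred) := by
      rcases (PNat.natPred_injective.ne hmn).lt_or_gt with h | h
      · exact hsep _ _ h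
      · exact (hsep _ _ h).symm
    have h := h.disjoint
    rwa [← (hside' m).1, ← (hside' m).2, ← (hside' n).1, ← (hside' n).2] at h
end

section
/- For t = 2/3, the squares S^t_n of side length n^{-t} for n = 1, 2, 3, ... can be packed perfectly into a square of side length √(ζ(4/3)). That is, there exist positions (x_n, y_n) ∈ ℝ² for each positive integer n such that each axis-parallel square [x_n, x_n + n^{-2/3}] × [y_n, y_n + n^{-2/3}] is contained in the square [0, √(ζ(4/3))] × [0, √(ζ(4/3))], and the interiors of distinct squares are pairwise disjoint. -/
/-- An axis-parallel rectangle with lower left corner `(x, y)`, width `w` and height `h`. -/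
structure Rect where
  x : ℝ
  y : ℝ
  w : ℝ
  h : ℝ

namespace Rect

/-- `R` is contained in `Q`, in terms of coordinates. -/
def Within (R Q : Rect) : Prop :=
  Q.x ≤ R.x ∧ R.x + R.w ≤ Q.x + Q.w ∧ Q.y ≤ R.y ∧ R.y + R.h ≤ Q.y + Q.h

/-- `R` and `Q` are separated by a horizontal or vertical line. -/
def Apart (R Q : Rect) : Prop :=
  R.x + R.w ≤ Q.x ∨ Q.x + Q.w ≤ R.x ∨ R.y + R.h ≤ Q.y ∨ Q.y + Q.h ≤ R.y

/-- The area of a rectangle. -/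
def area (R : Rect) : ℝ := R.w * R.h

/-- The potential of a rectangle relative to side length `s`: the shorter side if a square of
side `s` fits into the rectangle, the longer side otherwise. -/
noncomputable def potential (s : ℝ) (R : Rect) : ℝ :=
  if s ≤ min R.w R.h then min R.w R.h else max R.w R.h

theorem Within.refl (R : Rect) : R.Within R := ⟨le_rfl, le_rfl, le_rfl, le_rfl⟩

theorem Within.trans {P Q R : Rect} (hPQ : P.Within Q) (hQR : Q.Within R) : P.Within R := by
  obtain ⟨h₁, h₂, h₃, h₄⟩ := hPQ
  obtain ⟨k₁, k₂, k₃, k₄⟩ := hQR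
  exact ⟨k₁.trans h₁, h₂.trans k₂, k₃.trans h₃, h₄.trans k₄⟩

theorem Apart.symm {R Q : Rect} (h : R.Apart Q) : Q.Apart R := by
  unfold Apart at *
  tauto

theorem Apart.mono_left {P R Q : Rect} (h : R.Apart Q) (hP : P.Within R) : P.Apart Q := by
  obtain ⟨h₁, h₂, h₃, h₄⟩ := hP
  rcases h with h | h | h | h
  · exact Or.inl (h₂.trans h)
  · exact Or.inr (Or.inl (h.trans h₁))
  · exact Or.inr (Or.inr (Or.inl (h₄.trans h)))
  · exact Or.inr (Or.inr (Or.inr (h.trans h₃)))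

theorem Within.Icc_prod_subset {R Q : Rect} (h : R.Within Q) :
    Set.Icc R.x (R.x + R.w) ×ˢ Set.Icc R.y (R.y + R.h) ⊆
      Set.Icc Q.x (Q.x + Q.w) ×ˢ Set.Icc Q.y (Q.y + Q.h) :=
  Set.prod_mono (Set.Icc_subset_Icc h.1 h.2.1) (Set.Icc_subset_Icc h.2.2.1 h.2.2.2)

theorem Apart.disjoint_Ioo_prod {R Q : Rect} (h : R.Apart Q) :
    Disjoint (Set.Ioo R.x (R.x + R.w) ×ˢ Set.Ioo R.y (R.y + R.h))
      (Set.Ioo Q.x (Q.x + Q.w) ×ˢ Set.Ioo Q.y (Q.y + Q.h)) := by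
  rw [Set.disjoint_left]
  rintro ⟨p, q⟩ ⟨⟨h₁, h₂⟩, h₃, h₄⟩ ⟨⟨k₁, k₂⟩, k₃, k₄⟩
  dsimp only at *
  rcases h with h | h | h | h <;> linarith

theorem potential_monotone (R : Rect) : Monotone fun s => R.potential s := by
  intro s t hst
  have := min_le_max (a := R.w) (b := R.h)
  simp only [potential]
  split_ifs <;> linarith

theorem area_le_of_not_fits {s : ℝ} {R : Rect} (hw : 0 ≤ R.w)
    (hs : ¬ s ≤ min R.w R.h) : R.area ≤ s * R.potential s := by
  rw [area, potential, if_neg hs, ← min_mul_max]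
  exact mul_le_mul_of_nonneg_right (not_le.1 hs).le (le_max_of_le_left hw)

/-- A square of side `s` placed in a corner of a rectangle in which it fits leaves an L-shape
that can be cut into two rectangles such that the total potential grows by at most `s`. -/
theorem exists_cut {s : ℝ} (hs : 0 < s) (R : Rect) (hR : s ≤ min R.w R.h) :
    ∃ A B : Rect, A.Within R ∧ B.Within R ∧ A.Apart B ∧
      (⟨R.x, R.y, s, s⟩ : Rect).Apart A ∧ (⟨R.x, R.y, s, s⟩ : Rect).Apart B ∧
      (0 ≤ A.w ∧ 0 ≤ A.h) ∧ (0 ≤ B.w ∧ 0 ≤ B.h) ∧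
      A.area + B.area = R.area - s ^ 2 ∧
      A.potential s + B.potential s ≤ R.potential s + s := by
  obtain ⟨x, y, w, h⟩ := R
  obtain ⟨hw, hh⟩ := le_min_iff.1 hR
  dsimp only at hR hw hh
  rcases le_total w h with hwh | hwh
  · refine ⟨⟨x, y + s, w, h - s⟩, ⟨x + s, y, w - s, s⟩, ?_, ?_, ?_, ?_, ?_, ?_, ?_, ?_, ?_⟩
    · refine ⟨?_, ?_, ?_, ?_⟩ <;> dsimp only <;> linarith
    · refine ⟨?_, ?_, ?_, ?_⟩ <;> dsimp only <;> linarith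
    · exact Or.inr (Or.inr (Or.inr le_rfl))
    · exact Or.inr (Or.inr (Or.inl le_rfl))
    · exact Or.inl le_rfl
    · constructor <;> dsimp only <;> linarith
    · constructor <;> dsimp only <;> linarith
    · simp only [area]
      ring
    · simp only [potential, min_def, max_def]
      grind
  · refine ⟨⟨x + s, y, w - s, h⟩, ⟨x, y + s, s, h - s⟩, ?_, ?_, ?_, ?_, ?_, ?_, ?_, ?_, ?_⟩
    · refine ⟨?_, ?_, ?_, ?_⟩ <;> dsimp only <;> linarith
    · refine ⟨?_, ?_, ?_, ?_⟩ <;> dsimp only <;> linarith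
    · exact Or.inr (Or.inl le_rfl)
    · exact Or.inl le_rfl
    · exact Or.inr (Or.inr (Or.inl le_rfl))
    · constructor <;> dsimp only <;> linarith
    · constructor <;> dsimp only <;> linarith
    · simp only [area]
      ring
    · simp only [potential, min_def, max_def]
      grind

/-- If the total area of a list of separated rectangles exceeds `s` times their total potential,
then a square of side `s` can be packed into one of them, leaving a list of separated rectangles
whose total potential is larger by at most `s`. -/
theorem exists_place_square {s : ℝ} (hs : 0 < s) (L : List Rect)
    (hnonneg : ∀ R ∈ L, 0 ≤ R.w ∧ 0 ≤ R.h) (hapart : L.Pairwise Apart)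
    (harea : s * (L.map (potential s)).sum < (L.map area).sum) :
    ∃ (Q : Rect) (L' : List Rect), (Q.w = s ∧ Q.h = s) ∧ (∃ R ∈ L, Q.Within R) ∧
      (∀ R' ∈ L', Q.Apart R') ∧ (∀ R' ∈ L', ∃ R ∈ L, R'.Within R) ∧
      (∀ R' ∈ L', 0 ≤ R'.w ∧ 0 ≤ R'.h) ∧ L'.Pairwise Apart ∧
      (L'.map area).sum = (L.map area).sum - s ^ 2 ∧
      (L'.map (potential s)).sum ≤ (L.map (potential s)).sum + s := by
  obtain ⟨R, hRL, hR⟩ : ∃ R ∈ L, s ≤ min R.w R.h := by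
    by_contra! hno
    refine harea.not_ge ?_
    rw [← List.sum_map_mul_left]
    exact List.sum_le_sum fun R hR =>
      area_le_of_not_fits (hnonneg R hR).1 (not_le.2 (hno R hR))
  obtain ⟨K, hK⟩ : ∃ K, L.Perm (R :: K) := by
    classical
    exact ⟨_, List.perm_cons_erase hRL⟩
  have hmem : ∀ {P}, P ∈ K → P ∈ L := fun hP => hK.mem_iff.2 (List.mem_cons_of_mem _ hP)
  have hpw := hK.pairwise hapart fun h => h.symm
  rw [List.pairwise_cons] at hpw
  obtain ⟨A, B, hA, hB, hAB, hQA, hQB, hA0, hB0, hsum, hpot⟩ := exists_cut hs R hR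
  obtain ⟨hw, hh⟩ := le_min_iff.1 hR
  have hQ : (⟨R.x, R.y, s, s⟩ : Rect).Within R := by
    refine ⟨le_rfl, ?_, le_rfl, ?_⟩ <;> dsimp only <;> linarith
  refine ⟨⟨R.x, R.y, s, s⟩, A :: B :: K, ⟨rfl, rfl⟩, ⟨R, hRL, hQ⟩, ?_, ?_, ?_, ?_, ?_, ?_⟩
  · simp only [List.forall_mem_cons]
    exact ⟨hQA, hQB, fun P hP => (hpw.1 P hP).mono_left hQ⟩
  · simp only [List.forall_mem_cons]
    exact ⟨⟨R, hRL, hA⟩, ⟨R, hRL, hB⟩, fun P hP => ⟨P, hmem hP, Within.refl P⟩⟩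
  · simp only [List.forall_mem_cons]
    exact ⟨hA0, hB0, fun P hP => hnonneg P (hmem hP)⟩
  · simp only [List.pairwise_cons, List.forall_mem_cons]
    exact ⟨⟨hAB, fun P hP => (hpw.1 P hP).mono_left hA⟩,
      fun P hP => (hpw.1 P hP).mono_left hB, hpw.2⟩
  · rw [(hK.map area).sum_eq]
    simp only [List.map_cons, List.sum_cons]
    linarith
  · rw [(hK.map (potential s)).sum_eq]
    simp only [List.map_cons, List.sum_cons]
    linarith

/-- A list of rectangles that remain free in `[0, a] × [0, a]` after squares of sides
`s 0, …, s (n - 1)` have been packed. -/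
structure IsRemainder (a : ℝ) (s : ℕ → ℝ) (n : ℕ) (L : List Rect) : Prop where
  nonneg : ∀ R ∈ L, 0 ≤ R.w ∧ 0 ≤ R.h
  pairwise : L.Pairwise Apart
  within : ∀ R ∈ L, R.Within ⟨0, 0, a, a⟩
  area_eq : (L.map area).sum = a ^ 2 - ∑ k ∈ Finset.range n, s k ^ 2
  potential_le : (L.map (potential (s n))).sum ≤ a + ∑ k ∈ Finset.range n, s k

/-- A sequence of squares with decreasing sides can be packed into a square of side `a` if at
each stage the next side times the sum of `a` and of the sides already used is smaller than the
area that remains. -/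
theorem exists_packing {a : ℝ} {s : ℕ → ℝ} (ha : 0 ≤ a) (hpos : ∀ n, 0 < s n) (hanti : Antitone s)
    (hlt : ∀ n, s n * (a + ∑ k ∈ Finset.range n, s k) <
      a ^ 2 - ∑ k ∈ Finset.range n, s k ^ 2) :
    ∃ Q : ℕ → Rect, (∀ n, (Q n).w = s n ∧ (Q n).h = s n) ∧
      (∀ n, (Q n).Within ⟨0, 0, a, a⟩) ∧ ∀ m n, m ≠ n → (Q m).Apart (Q n) := by
  have hstep : ∀ n (L : {L // IsRemainder a s n L}),
      ∃ (L' : {L' // IsRemainder a s (n + 1) L'}) (Q : Rect), (Q.w = s n ∧ Q.h = s n) ∧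
        (∃ R ∈ L.1, Q.Within R) ∧ (∀ R' ∈ L'.1, Q.Apart R') ∧
        ∀ R' ∈ L'.1, ∃ R ∈ L.1, R'.Within R := by
    rintro n ⟨L, hL⟩
    obtain ⟨Q, L', hQ, hQL, hQL', hL', h0, hpw, harea, hpot⟩ :=
      exists_place_square (hpos n) L hL.nonneg hL.pairwise
        (((mul_le_mul_of_nonneg_left hL.potential_le (hpos n).le).trans_lt (hlt n)).trans_eq
          hL.area_eq.symm)
    refine ⟨⟨L', h0, hpw, fun R' hR' => ?_, ?_, ?_⟩, Q, hQ, hQL, hQL', hL'⟩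
    · obtain ⟨R, hR, hRR⟩ := hL' R' hR'
      exact hRR.trans (hL.within R hR)
    · rw [harea, hL.area_eq, Finset.sum_range_succ]
      ring
    · have hmono : (L'.map (potential (s (n + 1)))).sum ≤ (L'.map (potential (s n))).sum :=
        List.sum_le_sum fun R _ => R.potential_monotone (hanti n.le_succ)
      rw [Finset.sum_range_succ]
      linarith [hL.potential_le]
  choose next Q hQ hQL hQnext hnext using hstep
  have hinit : IsRemainder a s 0 [⟨0, 0, a, a⟩] :=
    ⟨by simp [ha], by simp, by simp [Within.refl], by simp [area, sq], by simp [potential]⟩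
  let S : (n : ℕ) → {L // IsRemainder a s n L} := fun n => Nat.rec ⟨_, hinit⟩ next n
  have hS : ∀ n, S (n + 1) = next n (S n) := fun n => rfl
  have hdesc : ∀ m d, ∀ R' ∈ (S (m + d)).1, ∃ R ∈ (S m).1, R'.Within R := by
    intro m d
    induction d with
    | zero => exact fun R hR => ⟨R, hR, Within.refl R⟩
    | succ d ih =>
      intro R' hR'
      obtain ⟨P, hP, hRP⟩ := hnext (m + d) (S (m + d)) R' hR'
      obtain ⟨R, hR, hPR⟩ := ih P hP
      exact ⟨R, hR, hRP.trans hPR⟩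
  have hapart : ∀ m n, m < n → (Q m (S m)).Apart (Q n (S n)) := by
    intro m n hmn
    obtain ⟨d, rfl⟩ := Nat.exists_eq_add_of_le (Nat.succ_le_of_lt hmn)
    obtain ⟨P, hP, hQP⟩ := hQL _ (S (m.succ + d))
    obtain ⟨R, hR, hPR⟩ := hdesc (m + 1) d P hP
    exact ((hQnext m (S m) R hR).symm.mono_left (hQP.trans hPR)).symm
  refine ⟨fun n => Q n (S n), fun n => hQ n _, fun n => ?_, fun m n hmn => ?_⟩
  · obtain ⟨R, hR, hQR⟩ := hQL n (S n)
    exact hQR.trans ((S n).2.within R hR)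
  · rcases lt_or_gt_of_ne hmn with h | h
    · exact hapart m n h
    · exact (hapart n m h).symm

end Rect

section CubeRoots

variable {a b : ℝ}

theorem sub_mul_sum_sq_eq_one (hab : b ^ 3 = a ^ 3 + 1) :
    (b - a) * (a ^ 2 + a * b + b ^ 2) = 1 := by
  linear_combination hab

theorem inv_sq_le_of_cube_succ (ha : 0 < a) (hle : a ≤ b) (hab : b ^ 3 = a ^ 3 + 1) :
    (b ^ 2)⁻¹ ≤ 3 * (b - a) := by
  have hb := ha.trans_le hle
  have h := sub_mul_sum_sq_eq_one hab
  rw [inv_le_iff_one_le_mul₀ (by positivity), ← h]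
  have : a ^ 2 + a * b + b ^ 2 ≤ 3 * b ^ 2 := by nlinarith
  nlinarith [mul_le_mul_of_nonneg_left this (sub_nonneg.2 hle)]

theorem inv_pow_four_le_of_cube_succ (ha : 0 < a) (hle : a ≤ b) (hab : b ^ 3 = a ^ 3 + 1) :
    (b ^ 4)⁻¹ ≤ 3 * (a⁻¹ - b⁻¹) := by
  have hb := ha.trans_le hle
  have h := sub_mul_sum_sq_eq_one hab
  have h₁ : a ^ 2 + a * b + b ^ 2 ≤ 3 * b ^ 2 := by nlinarith
  have h₂ : 1 ≤ 3 * (b - a) * b ^ 2 := by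
    nlinarith [mul_le_mul_of_nonneg_left h₁ (sub_nonneg.2 hle)]
  have h₃ : a⁻¹ - b⁻¹ = (b - a) / (a * b) := by field_simp
  rw [h₃, inv_eq_one_div, ← mul_div_assoc, div_le_div_iff₀ (by positivity) (by positivity)]
  nlinarith [mul_le_mul_of_nonneg_right h₂ (sq_nonneg b), mul_le_mul_of_nonneg_right hle hb.le]

theorem le_inv_pow_four_of_cube_succ (ha : 0 < a) (hle : a ≤ b) (hab : b ^ 3 = a ^ 3 + 1) :
    3 * (a⁻¹ - b⁻¹) ≤ (a ^ 4)⁻¹ := by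
  have hb := ha.trans_le hle
  have h := sub_mul_sum_sq_eq_one hab
  have h₁ : 3 * a ^ 2 ≤ a ^ 2 + a * b + b ^ 2 := by nlinarith
  have h₂ : 3 * (b - a) * a ^ 2 ≤ 1 := by
    nlinarith [mul_le_mul_of_nonneg_left h₁ (sub_nonneg.2 hle)]
  have h₃ : a⁻¹ - b⁻¹ = (b - a) / (a * b) := by field_simp
  rw [h₃, inv_eq_one_div, ← mul_div_assoc, div_le_div_iff₀ (by positivity) (by positivity)]
  nlinarith [mul_le_mul_of_nonneg_right h₂ (sq_nonneg a), mul_le_mul_of_nonneg_right hle ha.le]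

end CubeRoots

/-- The cube root of `n + 1`. -/
noncomputable def cbrtSucc (n : ℕ) : ℝ := ((n : ℝ) + 1) ^ (1 / 3 : ℝ)

theorem cbrtSucc_pos (n : ℕ) : 0 < cbrtSucc n := Real.rpow_pos_of_pos (by positivity) _

theorem cbrtSucc_zero : cbrtSucc 0 = 1 := by simp [cbrtSucc]

theorem cbrtSucc_mono : Monotone cbrtSucc := fun m n hmn =>
  Real.rpow_le_rpow (by positivity) (by simpa using hmn) (by norm_num)

theorem cbrtSucc_pow (n k : ℕ) : cbrtSucc n ^ k = ((n : ℝ) + 1) ^ ((k : ℝ) / 3) := by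
  rw [cbrtSucc, ← Real.rpow_natCast, ← Real.rpow_mul (by positivity)]
  congr 1
  ring

theorem cbrtSucc_succ_cube (n : ℕ) : cbrtSucc (n + 1) ^ 3 = cbrtSucc n ^ 3 + 1 := by
  simp [cbrtSucc_pow]

theorem inv_cbrtSucc_pow (n k : ℕ) :
    (cbrtSucc n ^ k)⁻¹ = ((n : ℝ) + 1) ^ (-((k : ℝ) / 3)) := by
  rw [cbrtSucc_pow, Real.rpow_neg (by positivity)]

theorem tendsto_inv_cbrtSucc :
    Filter.Tendsto (fun n => (cbrtSucc n)⁻¹) Filter.atTop (nhds 0) :=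
  ((tendsto_rpow_atTop (by norm_num : (0 : ℝ) < 1 / 3)).comp
    (Filter.tendsto_atTop_add_const_right _ 1 tendsto_natCast_atTop_atTop)).inv_tendsto_atTop

theorem sum_inv_cbrtSucc_sq_le (n : ℕ) :
    ∑ k ∈ Finset.range (n + 1), (cbrtSucc k ^ 2)⁻¹ ≤ 3 * cbrtSucc n - 2 := by
  induction n with
  | zero =>
    simp [cbrtSucc_zero]
    norm_num
  | succ n ih =>
    rw [Finset.sum_range_succ]
    linarith [inv_sq_le_of_cube_succ (cbrtSucc_pos n) (cbrtSucc_mono n.le_succ)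
      (cbrtSucc_succ_cube n)]

theorem sum_inv_cbrtSucc_pow_four_le (n : ℕ) :
    ∑ k ∈ Finset.range (n + 1), (cbrtSucc k ^ 4)⁻¹ ≤ 4 - 3 * (cbrtSucc n)⁻¹ := by
  induction n with
  | zero =>
    simp [cbrtSucc_zero]
    norm_num
  | succ n ih =>
    rw [Finset.sum_range_succ]
    linarith [inv_pow_four_le_of_cube_succ (cbrtSucc_pos n) (cbrtSucc_mono n.le_succ)
      (cbrtSucc_succ_cube n)]

theorem sum_range_inv_cbrtSucc_pow_four_le_four (n : ℕ) :
    ∑ k ∈ Finset.range n, (cbrtSucc k ^ 4)⁻¹ ≤ 4 := by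
  have h := sum_inv_cbrtSucc_pow_four_le n
  have h₀ := inv_pos.2 (cbrtSucc_pos n)
  have h₁ := inv_pos.2 (pow_pos (cbrtSucc_pos n) 4)
  rw [Finset.sum_range_succ] at h
  linarith

theorem zetaR_four_thirds_eq : zetaR (4 / 3) = ∑' n : ℕ, (cbrtSucc n ^ 4)⁻¹ := by
  rw [zetaR, tsum_pnat_eq_tsum_succ (f := fun n : ℕ => (n : ℝ) ^ (-(4 / 3 : ℝ)))]
  refine tsum_congr fun n => ?_
  rw [inv_cbrtSucc_pow]
  push_cast
  rfl

theorem zetaR_four_thirds_le_four : zetaR (4 / 3) ≤ 4 := by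
  rw [zetaR_four_thirds_eq]
  exact Real.tsum_le_of_sum_range_le
    (fun n => (inv_pos.2 (pow_pos (cbrtSucc_pos n) 4)).le) sum_range_inv_cbrtSucc_pow_four_le_four

theorem sum_add_inv_cbrtSucc_le_zetaR (n : ℕ) :
    ∑ k ∈ Finset.range n, (cbrtSucc k ^ 4)⁻¹ + 3 * (cbrtSucc n)⁻¹ ≤ zetaR (4 / 3) := by
  have hsum : Summable fun n => (cbrtSucc n ^ 4)⁻¹ :=
    summable_of_sum_range_le (fun n => (inv_pos.2 (pow_pos (cbrtSucc_pos n) 4)).le)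
      sum_range_inv_cbrtSucc_pow_four_le_four
  have hmono : Monotone fun n =>
      ∑ k ∈ Finset.range n, (cbrtSucc k ^ 4)⁻¹ + 3 * (cbrtSucc n)⁻¹ := by
    refine monotone_nat_of_le_succ fun n => ?_
    rw [Finset.sum_range_succ]
    linarith [le_inv_pow_four_of_cube_succ (cbrtSucc_pos n) (cbrtSucc_mono n.le_succ)
      (cbrtSucc_succ_cube n)]
  refine hmono.ge_of_tendsto ?_ n
  rw [zetaR_four_thirds_eq]
  simpa using hsum.hasSum.tendsto_sum_nat.add (tendsto_inv_cbrtSucc.const_mul 3)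

/-- For `t = 2/3`, the squares of side `n^{-t}` (`n ≥ 1`) can be packed perfectly into
the square `[0, √(ζ(4/3))] × [0, √(ζ(4/3))]`. -/
theorem perfect_packing_square_two_thirds :
    ∃ x y : ℕ+ → ℝ,
      (∀ n : ℕ+,
        Set.Icc (x n) (x n + (n : ℝ) ^ (-(2 / 3 : ℝ))) ×ˢ
            Set.Icc (y n) (y n + (n : ℝ) ^ (-(2 / 3 : ℝ))) ⊆
          Set.Icc (0 : ℝ) (Real.sqrt (zetaR (4 / 3))) ×ˢ
            Set.Icc (0 : ℝ) (Real.sqrt (zetaR (4 / 3)))) ∧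
      (∀ m n : ℕ+, m ≠ n →
        Disjoint
          (Set.Ioo (x m) (x m + (m : ℝ) ^ (-(2 / 3 : ℝ))) ×ˢ
            Set.Ioo (y m) (y m + (m : ℝ) ^ (-(2 / 3 : ℝ))))
          (Set.Ioo (x n) (x n + (n : ℝ) ^ (-(2 / 3 : ℝ))) ×ˢ
            Set.Ioo (y n) (y n + (n : ℝ) ^ (-(2 / 3 : ℝ))))) := by
  set a := Real.sqrt (zetaR (4 / 3)) with ha
  have hzeta : 0 ≤ zetaR (4 / 3) := tsum_nonneg fun n => by positivity
  have ha2 : a ≤ 2 := by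
    rw [ha, Real.sqrt_le_left (by norm_num)]
    exact zetaR_four_thirds_le_four.trans (by norm_num)
  obtain ⟨Q, hside, hwithin, hapart⟩ := Rect.exists_packing (a := a)
    (s := fun n => (cbrtSucc n ^ 2)⁻¹) (Real.sqrt_nonneg _)
    (fun n => inv_pos.2 (pow_pos (cbrtSucc_pos n) 2))
    (fun m n hmn => inv_anti₀ (pow_pos (cbrtSucc_pos m) 2)
      (pow_le_pow_left₀ (cbrtSucc_pos m).le (cbrtSucc_mono hmn) 2))
    (fun n => by
      have hc := cbrtSucc_pos n
      have hpos : 0 < (cbrtSucc n ^ 2)⁻¹ := by positivity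
      have hupper := sum_inv_cbrtSucc_sq_le n
      rw [Finset.sum_range_succ] at hupper
      have hlower := sum_add_inv_cbrtSucc_le_zetaR n
      have hsq : ∀ k, ((cbrtSucc k ^ 2)⁻¹) ^ 2 = (cbrtSucc k ^ 4)⁻¹ := fun k => by
        rw [inv_pow, ← pow_mul]
      simp only [hsq, ha, Real.sq_sqrt hzeta]
      calc (cbrtSucc n ^ 2)⁻¹ * (a + ∑ k ∈ Finset.range n, (cbrtSucc k ^ 2)⁻¹)
          < (cbrtSucc n ^ 2)⁻¹ * (3 * cbrtSucc n) := by gcongr; linarith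
        _ = 3 * (cbrtSucc n)⁻¹ := by field_simp
        _ ≤ _ := by linarith)
  have hcoe : ∀ n : ℕ+, (n : ℝ) ^ (-(2 / 3 : ℝ)) = (cbrtSucc n.natPred ^ 2)⁻¹ := fun n => by
    rw [inv_cbrtSucc_pow, ← Nat.cast_add_one, PNat.natPred_add_one]
    norm_num
  have hw : ∀ n : ℕ+, (n : ℝ) ^ (-(2 / 3 : ℝ)) = (Q n.natPred).w := fun n =>
    (hcoe n).trans (hside _).1.symm
  have hh : ∀ n : ℕ+, (n : ℝ) ^ (-(2 / 3 : ℝ)) = (Q n.natPred).h := fun n =>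
    (hcoe n).trans (hside _).2.symm
  refine ⟨fun n => (Q n.natPred).x, fun n => (Q n.natPred).y, fun n => ?_, fun m n hmn => ?_⟩
  · have h := (hwithin n.natPred).Icc_prod_subset
    rw [← hw, ← hh] at h
    simpa only [zero_add] using h
  · have h := (hapart m.natPred n.natPred (PNat.natPred_injective.ne hmn)).disjoint_Ioo_prod
    rwa [← hw, ← hh, ← hw, ← hh] at h
end
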